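/- arXiv:2211.14188 — 2 statements merged into one kernel-verified Lean document; each statement's English description precedes it below -/
import Mathlib

section
/- For every q ∈ (1,2] and all real numbers a, b one has the sub-quadratic inequality |a|^q − |b|^q ≤ sgn(b) · q · |b|^{q−1} · (a − b) + 2|a − b|^q, where sgn(b) denotes the sign of b (with sgn(0) = 0). -/
/-! For `1 < q ≤ 2` the gradient of `‖·‖ ^ q` on an inner product space is `x ↦ q ‖x‖ ^ (q - 2) x`,
and this map is Hölder continuous of exponent `q - 1` with constant `2 * q`. Integrating the
Hölder bound along the segment from `b` to `a` bounds the remainder of the first-order expansion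
of `‖·‖ ^ q` at `b` by `2 * q * ∫ t in 0..1, t ^ (q - 1) = 2` times `‖a - b‖ ^ q`. -/

section Holder

variable {E : Type*} [NormedAddCommGroup E] [NormedSpace ℝ E]

theorem norm_norm_rpow_smul_self_le (p : ℝ) (x : E) : ‖‖x‖ ^ p • x‖ ≤ ‖x‖ ^ (p + 1) := by
  rcases eq_or_ne x 0 with rfl | hx
  · rw [smul_zero, norm_zero]
    positivity
  · rw [norm_smul, Real.norm_of_nonneg (by positivity), Real.rpow_add_one (norm_ne_zero_iff.2 hx)]

theorem norm_rpow_smul_sub_rpow_smul_le_of_norm_le {p : ℝ} (hp₁ : -1 ≤ p) (hp₂ : p ≤ 0) {x y : E}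
    (hyx : ‖y‖ ≤ ‖x‖) :
    ‖‖x‖ ^ p • x - ‖y‖ ^ p • y‖ ≤ 2 * ‖x‖ ^ p * ‖x - y‖ := by
  rcases eq_or_ne y 0 with rfl | hy
  · rw [smul_zero, sub_zero, sub_zero, norm_smul, Real.norm_of_nonneg (by positivity), mul_assoc]
    exact le_mul_of_one_le_left (by positivity) one_le_two
  have y_pos : 0 < ‖y‖ := norm_pos_iff.2 hy
  have x_pos : 0 < ‖x‖ := y_pos.trans_le hyx
  have rpow_anti : ‖x‖ ^ p ≤ ‖y‖ ^ p := Real.rpow_le_rpow_of_nonpos y_pos hyx hp₂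
  have rescaling_le : (‖y‖ ^ p - ‖x‖ ^ p) * ‖y‖ ≤ ‖x‖ ^ p * ‖x - y‖ := calc
    (‖y‖ ^ p - ‖x‖ ^ p) * ‖y‖ = ‖y‖ ^ (p + 1) - ‖x‖ ^ p * ‖y‖ := by
      rw [Real.rpow_add_one y_pos.ne', sub_mul]
    _ ≤ ‖x‖ ^ (p + 1) - ‖x‖ ^ p * ‖y‖ := by gcongr; linarith
    _ = ‖x‖ ^ p * (‖x‖ - ‖y‖) := by rw [Real.rpow_add_one x_pos.ne', mul_sub]
    _ ≤ ‖x‖ ^ p * ‖x - y‖ := by gcongr; exact norm_sub_norm_le x y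
  calc ‖‖x‖ ^ p • x - ‖y‖ ^ p • y‖
      = ‖‖x‖ ^ p • (x - y) - (‖y‖ ^ p - ‖x‖ ^ p) • y‖ := by congr 1; module
    _ ≤ ‖‖x‖ ^ p • (x - y)‖ + ‖(‖y‖ ^ p - ‖x‖ ^ p) • y‖ := norm_sub_le _ _
    _ = ‖x‖ ^ p * ‖x - y‖ + (‖y‖ ^ p - ‖x‖ ^ p) * ‖y‖ := by
      rw [norm_smul, norm_smul, Real.norm_of_nonneg (by positivity),
        Real.norm_of_nonneg (sub_nonneg.2 rpow_anti)]
    _ ≤ 2 * ‖x‖ ^ p * ‖x - y‖ := by linarith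

theorem norm_rpow_smul_sub_rpow_smul_le {p : ℝ} (hp₁ : -1 ≤ p) (hp₂ : p ≤ 0) (x y : E) :
    ‖‖x‖ ^ p • x - ‖y‖ ^ p • y‖ ≤ 2 * ‖x - y‖ ^ (p + 1) := by
  wlog hyx : ‖y‖ ≤ ‖x‖ generalizing x y
  · rw [norm_sub_rev, norm_sub_rev x]
    exact this y x (le_of_not_ge hyx)
  rcases eq_or_ne x y with rfl | hxy
  · rw [sub_self, norm_zero]
    positivity
  have dist_pos : 0 < ‖x - y‖ := norm_sub_pos_iff.2 hxy
  rcases le_total ‖x‖ ‖x - y‖ with hfar | hnear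
  · calc ‖‖x‖ ^ p • x - ‖y‖ ^ p • y‖
        ≤ ‖x‖ ^ (p + 1) + ‖y‖ ^ (p + 1) :=
          norm_sub_le_of_le (norm_norm_rpow_smul_self_le p x) (norm_norm_rpow_smul_self_le p y)
      _ ≤ ‖x - y‖ ^ (p + 1) + ‖x - y‖ ^ (p + 1) := by gcongr <;> linarith
      _ = 2 * ‖x - y‖ ^ (p + 1) := by ring
  · calc ‖‖x‖ ^ p • x - ‖y‖ ^ p • y‖
        ≤ 2 * ‖x‖ ^ p * ‖x - y‖ := norm_rpow_smul_sub_rpow_smul_le_of_norm_le hp₁ hp₂ hyx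
      _ ≤ 2 * ‖x - y‖ ^ p * ‖x - y‖ := by
          gcongr 2 * ?_ * _
          exact Real.rpow_le_rpow_of_nonpos dist_pos hnear hp₂
      _ = 2 * ‖x - y‖ ^ (p + 1) := by rw [mul_assoc, Real.rpow_add_one dist_pos.ne']

end Holder

section FirstOrderExpansion

variable {E F : Type*} [NormedAddCommGroup E] [NormedSpace ℝ E] [NormedAddCommGroup F]
  [NormedSpace ℝ F]

theorem norm_sub_sub_le_of_norm_deriv_sub_le_mul_rpow {g g' : ℝ → F} {C r : ℝ} (hr : 0 ≤ r)
    (hg : ∀ t ∈ Set.Icc (0 : ℝ) 1, HasDerivWithinAt g (g' t) (Set.Icc 0 1) t)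
    (hg' : ∀ t ∈ Set.Icc (0 : ℝ) 1, ‖g' t - g' 0‖ ≤ C * t ^ r) :
    ‖g 1 - g 0 - g' 0‖ ≤ C / (r + 1) := by
  have remainder_deriv (t : ℝ) (ht : t ∈ Set.Icc (0 : ℝ) 1) :
      HasDerivWithinAt (fun u ↦ g u - g 0 - u • g' 0) (g' t - g' 0) (Set.Icc 0 1) t := by
    simpa using ((hg t ht).sub_const (g 0)).fun_sub ((hasDerivWithinAt_id t _).smul_const (g' 0))
  have bound_deriv (t : ℝ) : HasDerivAt (fun u ↦ C / (r + 1) * u ^ (r + 1)) (C * t ^ r) t := by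
    have := (Real.hasDerivAt_rpow_const (x := t) (.inr (by linarith : 1 ≤ r + 1))).const_mul
      (C / (r + 1))
    rwa [add_sub_cancel_right, ← mul_assoc, div_mul_cancel₀ C (by linarith)] at this
  have remainder_le := image_norm_le_of_norm_deriv_right_le_deriv_boundary
    (fun t ht ↦ (remainder_deriv t ht).continuousWithinAt)
    (fun t ht ↦ (remainder_deriv t (Set.Ico_subset_Icc_self ht)).mono_of_mem_nhdsWithin
      (Icc_mem_nhdsGE_of_mem ht))
    (by simp [Real.zero_rpow (by linarith : r + 1 ≠ 0)]) bound_deriv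
    (fun t ht ↦ hg' t (Set.Ico_subset_Icc_self ht)) (Set.right_mem_Icc.2 zero_le_one)
  simpa using remainder_le

theorem norm_sub_sub_fderiv_le_of_holder {f : E → F} {f' : E → E →L[ℝ] F} {s : Set E} {a b : E}
    {K r : ℝ} (hs : Convex ℝ s) (ha : a ∈ s) (hb : b ∈ s) (hr : 0 ≤ r)
    (hf : ∀ x ∈ s, HasFDerivWithinAt f (f' x) s x)
    (hf' : ∀ x ∈ s, ‖f' x - f' b‖ ≤ K * ‖x - b‖ ^ r) :
    ‖f a - f b - f' b (a - b)‖ ≤ K / (r + 1) * ‖a - b‖ ^ (r + 1) := by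
  let γ : ℝ →ᵃ[ℝ] E := AffineMap.lineMap b a
  have γ_mem : Set.MapsTo γ (Set.Icc 0 1) s := fun t ht ↦ hs.lineMap_mem hb ha ht
  have deriv_along (t : ℝ) (ht : t ∈ Set.Icc (0 : ℝ) 1) :
      HasDerivWithinAt (f ∘ γ) (f' (γ t) (a - b)) (Set.Icc 0 1) t :=
    (hf _ (γ_mem ht)).comp_hasDerivWithinAt t AffineMap.hasDerivWithinAt_lineMap γ_mem
  have deriv_sub_le (t : ℝ) (ht : t ∈ Set.Icc (0 : ℝ) 1) :
      ‖f' (γ t) (a - b) - f' (γ 0) (a - b)‖ ≤ K * ‖a - b‖ ^ (r + 1) * t ^ r := calc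
    ‖f' (γ t) (a - b) - f' (γ 0) (a - b)‖ = ‖(f' (γ t) - f' b) (a - b)‖ := by simp [γ]
    _ ≤ ‖f' (γ t) - f' b‖ * ‖a - b‖ := ContinuousLinearMap.le_opNorm _ _
    _ ≤ K * ‖γ t - b‖ ^ r * ‖a - b‖ := by gcongr; exact hf' _ (γ_mem ht)
    _ = K * (t * ‖a - b‖) ^ r * ‖a - b‖ := by
      simp [γ, AffineMap.lineMap_apply, norm_smul, abs_of_nonneg ht.1]
    _ = K * ‖a - b‖ ^ (r + 1) * t ^ r := by
      rw [Real.mul_rpow ht.1 (norm_nonneg _),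
        Real.rpow_add_one' (norm_nonneg _) (by linarith)]
      ring
  have := norm_sub_sub_le_of_norm_deriv_sub_le_mul_rpow hr deriv_along deriv_sub_le
  simpa [γ, mul_div_right_comm] using this

end FirstOrderExpansion

theorem subquadratic_inequality_general {E : Type*} [NormedAddCommGroup E] [InnerProductSpace ℝ E]
    {q : ℝ} (hq1 : 1 < q) (hq2 : q ≤ 2) (a b : E) :
    ‖a‖ ^ q - ‖b‖ ^ q ≤ q * ‖b‖ ^ (q - 2) * inner ℝ b (a - b) + 2 * ‖a - b‖ ^ q := by
  have gradient_holder (x : E) : ‖(q * ‖x‖ ^ (q - 2)) • innerSL ℝ x -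
      (q * ‖b‖ ^ (q - 2)) • innerSL ℝ b‖ ≤ 2 * q * ‖x - b‖ ^ (q - 1) := calc
    _ = ‖innerSL ℝ (q • (‖x‖ ^ (q - 2) • x - ‖b‖ ^ (q - 2) • b))‖ := by
      simp only [map_smul, map_sub, smul_sub, mul_smul]
    _ = q * ‖‖x‖ ^ (q - 2) • x - ‖b‖ ^ (q - 2) • b‖ := by
      rw [innerSL_apply_norm, norm_smul, Real.norm_of_nonneg (by linarith)]
    _ ≤ q * (2 * ‖x - b‖ ^ (q - 2 + 1)) := by
      gcongr
      exact norm_rpow_smul_sub_rpow_smul_le (by linarith) (by linarith) x b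
    _ = 2 * q * ‖x - b‖ ^ (q - 1) := by ring_nf
  have expansion := norm_sub_sub_fderiv_le_of_holder convex_univ (Set.mem_univ a) (Set.mem_univ b)
    (sub_nonneg.2 hq1.le) (fun x _ ↦ (hasFDerivAt_norm_rpow x hq1).hasFDerivWithinAt)
    (fun x _ ↦ gradient_holder x)
  rw [sub_add_cancel, mul_div_cancel_right₀ _ (by linarith)] at expansion
  have upper := (le_abs_self _).trans expansion
  simp only [smul_apply, innerSL_apply_apply, smul_eq_mul] at upper
  linarith

theorem sign_mul_abs_rpow_add_one (x p : ℝ) : Real.sign x * |x| ^ (p + 1) = |x| ^ p * x := by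
  rcases lt_trichotomy x 0 with hx | rfl | hx
  · rw [Real.sign_of_neg hx, Real.rpow_add_one (abs_ne_zero.2 hx.ne), abs_of_neg hx]
    ring
  · simp
  · rw [Real.sign_of_pos hx, Real.rpow_add_one (abs_ne_zero.2 hx.ne'), abs_of_pos hx, one_mul]

/-- **Sub-quadratic inequality.** For every `q ∈ (1,2]` and all real `a, b`:
`|a|^q − |b|^q ≤ sgn(b)·q·|b|^{q−1}·(a−b) + 2|a−b|^q`, where `sgn(0) = 0`. -/
theorem subquadratic_inequality (q : ℝ) (hq1 : 1 < q) (hq2 : q ≤ 2) (a b : ℝ) :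
    |a| ^ q - |b| ^ q ≤
      Real.sign b * q * |b| ^ (q - 1) * (a - b) + 2 * |a - b| ^ q := by
  have sign_mul_abs_rpow : Real.sign b * |b| ^ (q - 1) = |b| ^ (q - 2) * b := by
    rw [← sign_mul_abs_rpow_add_one, show q - 2 + 1 = q - 1 by ring]
  calc |a| ^ q - |b| ^ q
      ≤ q * |b| ^ (q - 2) * ((a - b) * b) + 2 * |a - b| ^ q :=
        subquadratic_inequality_general hq1 hq2 a b
    _ = Real.sign b * q * |b| ^ (q - 1) * (a - b) + 2 * |a - b| ^ q := by
        linear_combination -(q * (a - b)) * sign_mul_abs_rpow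
end

section
/- Let q ∈ (1,2], let μ be a probability measure on a measurable space X and let f ∈ L^q(μ). Then ∫ |f|^q dμ − |∫ f dμ|^q ≤ 2 ∫ |f − ∫ f dμ|^q dμ. -/
open MeasureTheory

/-!
For `m, h` in a real inner product space and `1 ≤ q ≤ 2`,
`‖m + h‖ ^ q ≤ ‖m‖ ^ q + q ‖m‖ ^ (q - 2) ⟪m, h⟫ + 2 ‖h‖ ^ q`.
With `m = ∫ f` and `h = f x - m`, integrating over `x` kills the middle term. (For `m = 0` that
term is zero whatever the value of `0 ^ (q - 2)`.)

To prove the pointwise inequality, write `‖m + h‖ ^ q = (‖m‖ ^ 2 + 2 ⟪m, h⟫ + ‖h‖ ^ 2) ^ (q / 2)`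
and bound the concave function `t ↦ t ^ (q / 2)` by its tangent line at the larger of `‖m‖ ^ 2`
and `‖h‖ ^ 2`.
-/

section Tangent

variable {a b p q : ℝ}

theorem rpow_le_rpow_add_mul_sub (ha : 0 < a) (hb : 0 ≤ b) (hp₀ : 0 ≤ p) (hp₁ : p ≤ 1) :
    b ^ p ≤ a ^ p + p * a ^ (p - 1) * (b - a) := by
  have hba : -1 ≤ b / a - 1 := by linarith [div_nonneg hb ha.le]
  calc b ^ p = a ^ p * (1 + (b / a - 1)) ^ p := by
        rw [add_sub_cancel, ← Real.mul_rpow ha.le (by positivity), mul_div_cancel₀ _ ha.ne']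
    _ ≤ a ^ p * (1 + p * (b / a - 1)) := by
        gcongr
        exact rpow_one_add_le_one_add_mul_self hba hp₀ hp₁
    _ = a ^ p + p * a ^ (p - 1) * (b - a) := by
        rw [Real.rpow_sub_one ha.ne']
        field_simp

theorem rpow_add_mul_sub_le_rpow (ha : 0 < a) (hb : 0 ≤ b) (hp : 1 ≤ p) :
    a ^ p + p * a ^ (p - 1) * (b - a) ≤ b ^ p := by
  have hba : -1 ≤ b / a - 1 := by linarith [div_nonneg hb ha.le]
  calc a ^ p + p * a ^ (p - 1) * (b - a) = a ^ p * (1 + p * (b / a - 1)) := by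
        rw [Real.rpow_sub_one ha.ne']
        field_simp
    _ ≤ a ^ p * (1 + (b / a - 1)) ^ p := by
        gcongr
        exact one_add_mul_self_le_rpow_one_add hba hp
    _ = b ^ p := by
        rw [add_sub_cancel, ← Real.mul_rpow ha.le (by positivity), mul_div_cancel₀ _ ha.ne']

theorem rpow_le_rpow_add_mul_sq_sub_sq (ha : 0 < a) (hb : 0 ≤ b) (hq₀ : 0 ≤ q) (hq₂ : q ≤ 2) :
    b ^ q ≤ a ^ q + q / 2 * a ^ (q - 2) * (b ^ 2 - a ^ 2) := by
  have sq_rpow {c : ℝ} (hc : 0 ≤ c) (r : ℝ) : (c ^ 2) ^ r = c ^ (2 * r) := by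
    rw [← Real.rpow_two, ← Real.rpow_mul hc]
  have h := rpow_le_rpow_add_mul_sub (p := q / 2) (pow_pos ha 2) (sq_nonneg b)
    (by linarith) (by linarith)
  rwa [sq_rpow hb, sq_rpow ha.le, sq_rpow ha.le, mul_sub_one, mul_div_cancel₀ q two_ne_zero] at h

theorem rpow_sub_two_mul_sq (ha : 0 < a) (q : ℝ) : a ^ (q - 2) * a ^ 2 = a ^ q := by
  rw [← Real.rpow_two, ← Real.rpow_add ha, sub_add_cancel]

end Tangent

section InnerProductSpace

open scoped RealInnerProductSpace

variable {E : Type*} [NormedAddCommGroup E] [InnerProductSpace ℝ E] {q : ℝ} {u v : E}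

theorem norm_add_rpow_le_of_norm_le (hq₀ : 0 ≤ q) (hq₂ : q ≤ 2) (huv : ‖v‖ ≤ ‖u‖) :
    ‖u + v‖ ^ q ≤ ‖u‖ ^ q + q * ‖u‖ ^ (q - 2) * ⟪u, v⟫ + q / 2 * ‖v‖ ^ q := by
  rcases eq_or_ne v 0 with rfl | hv
  · simp only [add_zero, inner_zero_right, mul_zero, le_add_iff_nonneg_right]
    positivity
  have hv : 0 < ‖v‖ := norm_pos_iff.2 hv
  have tangent := rpow_le_rpow_add_mul_sq_sub_sq (hv.trans_le huv) (norm_nonneg (u + v)) hq₀ hq₂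
  have remainder : ‖u‖ ^ (q - 2) * ‖v‖ ^ 2 ≤ ‖v‖ ^ q := by
    rw [← rpow_sub_two_mul_sq hv]
    exact mul_le_mul_of_nonneg_right (Real.rpow_le_rpow_of_nonpos hv huv (by linarith))
      (sq_nonneg _)
  calc ‖u + v‖ ^ q
      ≤ ‖u‖ ^ q + q / 2 * ‖u‖ ^ (q - 2) * (‖u + v‖ ^ 2 - ‖u‖ ^ 2) := tangent
    _ = ‖u‖ ^ q + q * ‖u‖ ^ (q - 2) * ⟪u, v⟫ + q / 2 * (‖u‖ ^ (q - 2) * ‖v‖ ^ 2) := by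
        rw [norm_add_sq_real]
        ring
    _ ≤ ‖u‖ ^ q + q * ‖u‖ ^ (q - 2) * ⟪u, v⟫ + q / 2 * ‖v‖ ^ q := by gcongr

theorem norm_add_rpow_le_of_le_norm (hq₁ : 1 ≤ q) (hq₂ : q ≤ 2) (huv : ‖u‖ ≤ ‖v‖) :
    ‖u + v‖ ^ q ≤ ‖u‖ ^ q + q * ‖u‖ ^ (q - 2) * ⟪u, v⟫ + 2 * ‖v‖ ^ q := by
  rcases eq_or_ne u 0 with rfl | hu
  · rw [zero_add, norm_zero, inner_zero_left, mul_zero, Real.zero_rpow (by linarith)]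
    linarith [Real.rpow_nonneg (norm_nonneg v) q]
  have hq₀ : 0 ≤ q := by linarith
  have hu : 0 < ‖u‖ := norm_pos_iff.2 hu
  have hv : 0 < ‖v‖ := hu.trans_le huv
  set A := ‖u‖ ^ (q - 2)
  set B := ‖v‖ ^ (q - 2)
  have hA : A * ‖u‖ ^ 2 = ‖u‖ ^ q := rpow_sub_two_mul_sq hu q
  have hB : 0 ≤ B := by positivity
  have hBA : B ≤ A := Real.rpow_le_rpow_of_nonpos hu huv (by linarith)
  have tangent : ‖u + v‖ ^ q ≤ ‖v‖ ^ q + q * B * (⟪u, v⟫ + ‖u‖ ^ 2 / 2) := by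
    have h := rpow_le_rpow_add_mul_sq_sub_sq hv (norm_nonneg (u + v)) hq₀ hq₂
    rw [norm_add_sq_real] at h
    linarith
  have cauchy_schwarz : 0 ≤ q * (A - B) * (⟪u, v⟫ + ‖u‖ * ‖v‖) :=
    mul_nonneg (mul_nonneg hq₀ (by linarith))
      (by linarith [neg_le_of_abs_le (abs_real_inner_le_norm u v)])
  have bernoulli : ‖u‖ ^ q + q * (A * ‖u‖) * (‖v‖ - ‖u‖) ≤ ‖v‖ ^ q := by
    have hAu : A * ‖u‖ = ‖u‖ ^ (q - 1) := by
      rw [← Real.rpow_add_one hu.ne']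
      ring_nf
    rw [hAu]
    exact rpow_add_mul_sub_le_rpow hu hv.le hq₁
  have slack : 0 ≤ (2 - q) * (A * ‖u‖ ^ 2) + q * B * ‖u‖ * (‖v‖ - ‖u‖ / 2) :=
    add_nonneg (mul_nonneg (by linarith) (by positivity))
      (mul_nonneg (mul_nonneg (mul_nonneg hq₀ hB) hu.le) (by linarith))
  calc ‖u + v‖ ^ q
      ≤ ‖v‖ ^ q + q * B * (⟪u, v⟫ + ‖u‖ ^ 2 / 2) := tangent
    _ ≤ ‖v‖ ^ q + q * A * ⟪u, v⟫ + q * (A - B) * (‖u‖ * ‖v‖) + q * B * ‖u‖ ^ 2 / 2 := by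
        linarith
    _ ≤ ‖u‖ ^ q + q * A * ⟪u, v⟫ + 2 * ‖v‖ ^ q := by linarith

theorem norm_add_rpow_le (hq₁ : 1 ≤ q) (hq₂ : q ≤ 2) (u v : E) :
    ‖u + v‖ ^ q ≤ ‖u‖ ^ q + q * ‖u‖ ^ (q - 2) * ⟪u, v⟫ + 2 * ‖v‖ ^ q := by
  rcases le_total ‖u‖ ‖v‖ with huv | huv
  · exact norm_add_rpow_le_of_le_norm hq₁ hq₂ huv
  · refine (norm_add_rpow_le_of_norm_le (by linarith) hq₂ huv).trans ?_
    gcongr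
    linarith

end InnerProductSpace

section Integral

open scoped RealInnerProductSpace

variable {X E : Type*} [MeasurableSpace X] {μ : Measure X} [NormedAddCommGroup E] {f : X → E}

theorem integrable_norm_rpow_of_memLp_ofReal {q : ℝ} (hq : 0 < q)
    (hf : MemLp f (ENNReal.ofReal q) μ) : Integrable (fun x ↦ ‖f x‖ ^ q) μ := by
  simpa only [ENNReal.toReal_ofReal hq.le] using
    hf.integrable_norm_rpow (ENNReal.ofReal_pos.2 hq).ne' ENNReal.ofReal_ne_top

theorem integral_inner_sub_integral_eq_zero [InnerProductSpace ℝ E] [CompleteSpace E]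
    [IsProbabilityMeasure μ] (hf : Integrable f μ) (c : E) :
    ∫ x, ⟪c, f x - ∫ y, f y ∂μ⟫ ∂μ = 0 := by
  have hdev : Integrable (fun x ↦ f x - ∫ y, f y ∂μ) μ := hf.sub (integrable_const _)
  rw [integral_inner hdev, integral_sub hf (integrable_const _)]
  simp

theorem jensen_gap_variance_general [InnerProductSpace ℝ E] [CompleteSpace E]
    [IsProbabilityMeasure μ] {q : ℝ} (hq₁ : 1 ≤ q) (hq₂ : q ≤ 2)
    (hf : MemLp f (ENNReal.ofReal q) μ) :
    ∫ x, ‖f x‖ ^ q ∂μ - ‖∫ x, f x ∂μ‖ ^ q ≤ 2 * ∫ x, ‖f x - ∫ y, f y ∂μ‖ ^ q ∂μ := by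
  have hq₀ : 0 < q := by linarith
  have hf_int : Integrable f μ := hf.integrable (ENNReal.one_le_ofReal.2 hq₁)
  set m := ∫ x, f x ∂μ with hm
  have hlin : Integrable (fun x ↦ q * ‖m‖ ^ (q - 2) * ⟪m, f x - m⟫) μ :=
    ((hf_int.sub (integrable_const m)).const_inner m).const_mul _
  have hdev : Integrable (fun x ↦ 2 * ‖f x - m‖ ^ q) μ :=
    (integrable_norm_rpow_of_memLp_ofReal hq₀ (hf.sub (memLp_const m))).const_mul 2
  have hbound : Integrable (fun x ↦ ‖m‖ ^ q + q * ‖m‖ ^ (q - 2) * ⟪m, f x - m⟫) μ :=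
    (integrable_const _).add hlin
  rw [sub_le_iff_le_add']
  calc ∫ x, ‖f x‖ ^ q ∂μ
      ≤ ∫ x, ‖m‖ ^ q + q * ‖m‖ ^ (q - 2) * ⟪m, f x - m⟫ + 2 * ‖f x - m‖ ^ q ∂μ :=
        integral_mono (integrable_norm_rpow_of_memLp_ofReal hq₀ hf) (hbound.add hdev) fun x ↦ by
          simpa only [add_sub_cancel] using norm_add_rpow_le hq₁ hq₂ m (f x - m)
    _ = ‖m‖ ^ q + 2 * ∫ x, ‖f x - m‖ ^ q ∂μ := by
        rw [integral_add hbound hdev, integral_add (integrable_const _) hlin, integral_const_mul,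
          integral_const_mul, hm, integral_inner_sub_integral_eq_zero hf_int]
        simp

end Integral

/-- For `q ∈ (1,2]`, a probability measure `μ` and `f ∈ L^q(μ)`:
`∫|f|^q dμ − |∫ f dμ|^q ≤ 2 ∫ |f − ∫ f dμ|^q dμ`. -/
theorem jensen_gap_variance (X : Type*) [MeasurableSpace X] (μ : Measure X)
    [IsProbabilityMeasure μ] (q : ℝ) (hq1 : 1 < q) (hq2 : q ≤ 2) (f : X → ℝ)
    (hf : MemLp f (ENNReal.ofReal q) μ) :
    ∫ x, |f x| ^ q ∂μ - |∫ x, f x ∂μ| ^ q ≤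
      2 * ∫ x, |f x - ∫ y, f y ∂μ| ^ q ∂μ :=
  jensen_gap_variance_general hq1.le hq2 hf
end
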